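/- Let θ = (1+√5)/2, θ̄ = (1−√5)/2, O_L = ℤ[i][θ], σ(a + bθ) = a + bθ̄. Let β₁, …, β_K ∈ O_L be nonzero elements whose generated ideals are pairwise comaximal (β_s O_L + β_t O_L = O_L for s ≠ t). For every subset S ⊆ {1, …, K}, setting B = ∏_{s∈S} β_s, the minimum of |x₀σ(x₀) − i·x₁σ(x₁)|² over (x₀, x₁) ∈ (B·O_L)² \ {(0,0)} equals ∏_{s∈S} N(β_s O_L), where N denotes the absolute ideal norm. (Hence the minimum determinant of the layered Golden-coded index code given side information indexed by S is δ(C_S) = δ(C)·∏_{s∈S} N(β_s O_L), corresponding to a normalized side information gain of exactly 20 log₁₀ 2 ≈ 6.02 dB per bit per real symbol.) -/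

import Mathlib

noncomputable section

open Complex GaussianInt

/-- `θ = (1+√5)/2` as a complex number. -/
def thC : ℂ := (1 + Real.sqrt 5) / 2

/-- `θ̄ = (1−√5)/2` as a complex number. -/
def thbC : ℂ := (1 - Real.sqrt 5) / 2

/-- The ring of integers `O_L = ℤ[i][θ]` of `L = ℚ(i,√5)`, realized as the subring of
`ℂ` generated by `i` and `θ`. -/
def OL : Subring ℂ := Subring.closure {Complex.I, thC}

/-!
The prime `2 - i` of `ℤ[i]` ramifies in `O_L`: the discriminant is `5 = (2 - i)(2 + i)`. Since
`i ≡ 2` is not a square modulo `2 - i`, a descent shows that `N(x) = i N(y)` forces `x = y = 0`,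
where `N` is the norm from `O_L` to `ℤ[i]`. So `N(x) - i N(y)` is a nonzero Gaussian integer for
`(x, y) ≠ (0, 0)`, of absolute value at least `1`. Replacing `(x, y)` by `(Bx, By)` multiplies it
by `N(B)`, and `|N(B)|² = |O_L / B O_L|` because norms are transitive.
-/

section Descent

variable {R F : Type*} [CommRing R] [Field F] (φ : R →+* F) {π c u : R}

theorem eq_zero_of_sq_eq_mul_sq {x y v : F} (hv : ¬IsSquare v)
    (h : x ^ 2 = v * y ^ 2) : x = 0 ∧ y = 0 := by
  have hy : y = 0 := by
    by_contra hy
    exact hv ⟨x / y, by field_simp; exact h.symm⟩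
  exact ⟨by simpa [hy] using h, hy⟩

theorem dvd_of_sq_sub_mul_sq_eq [IsDomain R] (hφ : ∀ x, φ x = 0 ↔ π ∣ x) (hπ : π ≠ 0)
    (hc : φ c ≠ 0) (hu : ¬IsSquare (φ u)) {x y z w : R}
    (h : x ^ 2 - π * c * y ^ 2 = u * (z ^ 2 - π * c * w ^ 2)) :
    (π ∣ x ∧ π ∣ y) ∧ π ∣ z ∧ π ∣ w := by
  have hφπ : φ π = 0 := (hφ π).2 dvd_rfl
  obtain ⟨hx, hz⟩ : φ x = 0 ∧ φ z = 0 :=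
    eq_zero_of_sq_eq_mul_sq hu (by simpa [hφπ] using congrArg φ h)
  obtain ⟨x', rfl⟩ := (hφ x).1 hx
  obtain ⟨z', rfl⟩ := (hφ z).1 hz
  have h' : π * x' ^ 2 - c * y ^ 2 = u * (π * z' ^ 2 - c * w ^ 2) :=
    mul_left_cancel₀ hπ (by linear_combination h)
  have hyw : φ c * φ y ^ 2 = φ c * (φ u * φ w ^ 2) := by
    have := congrArg φ h'
    simp only [map_sub, map_mul, map_pow, hφπ] at this
    linear_combination -this
  obtain ⟨hy, hw⟩ := eq_zero_of_sq_eq_mul_sq hu (mul_left_cancel₀ hc hyw)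
  exact ⟨⟨dvd_mul_right π x', (hφ y).1 hy⟩, dvd_mul_right π z', (hφ w).1 hw⟩

theorem pow_dvd_of_sq_sub_mul_sq_eq [IsDomain R] (hφ : ∀ x, φ x = 0 ↔ π ∣ x) (hπ : π ≠ 0)
    (hc : φ c ≠ 0) (hu : ¬IsSquare (φ u)) (n : ℕ) {x y z w : R}
    (h : x ^ 2 - π * c * y ^ 2 = u * (z ^ 2 - π * c * w ^ 2)) :
    (π ^ n ∣ x ∧ π ^ n ∣ y) ∧ π ^ n ∣ z ∧ π ^ n ∣ w := by
  induction n generalizing x y z w with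
  | zero => simp
  | succ n ih =>
    obtain ⟨⟨⟨x, rfl⟩, y, rfl⟩, ⟨z, rfl⟩, w, rfl⟩ := dvd_of_sq_sub_mul_sq_eq φ hφ hπ hc hu h
    have h' : x ^ 2 - π * c * y ^ 2 = u * (z ^ 2 - π * c * w ^ 2) :=
      mul_left_cancel₀ (pow_ne_zero 2 hπ) (by linear_combination h)
    simpa only [pow_succ', mul_dvd_mul_iff_left hπ] using ih h'

theorem eq_zero_of_forall_pow_dvd {M : Type*} [CommMonoidWithZero M] [IsCancelMulZero M]
    [WfDvdMonoid M] {p x : M} (hp : ¬IsUnit p) (h : ∀ n : ℕ, p ^ n ∣ x) : x = 0 := by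
  by_contra hx
  obtain ⟨n, hn⟩ := FiniteMultiplicity.of_not_isUnit hp hx
  exact hn (h (n + 1))

theorem eq_zero_of_sq_sub_mul_sq_eq [IsDomain R] [WfDvdMonoid R] (hφ : ∀ x, φ x = 0 ↔ π ∣ x)
    (hπ : π ≠ 0) (hc : φ c ≠ 0) (hu : ¬IsSquare (φ u)) {x y z w : R}
    (h : x ^ 2 - π * c * y ^ 2 = u * (z ^ 2 - π * c * w ^ 2)) :
    (x = 0 ∧ y = 0) ∧ z = 0 ∧ w = 0 := by
  have hunit : ¬IsUnit π := fun hπu => (hπu.map φ).ne_zero ((hφ π).2 dvd_rfl)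
  have hdvd n := pow_dvd_of_sq_sub_mul_sq_eq φ hφ hπ hc hu n h
  exact ⟨⟨eq_zero_of_forall_pow_dvd hunit fun n => (hdvd n).1.1,
      eq_zero_of_forall_pow_dvd hunit fun n => (hdvd n).1.2⟩,
    eq_zero_of_forall_pow_dvd hunit fun n => (hdvd n).2.1,
    eq_zero_of_forall_pow_dvd hunit fun n => (hdvd n).2.2⟩

theorem four_mul_quadraticAlgebra_norm {a b : R} (x : QuadraticAlgebra R a b) :
    4 * x.norm = (2 * x.re + b * x.im) ^ 2 - (b ^ 2 + 4 * a) * x.im ^ 2 := by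
  rw [QuadraticAlgebra.norm_def]
  ring

theorem quadraticAlgebra_eq_zero_of_norm_eq_mul_norm [IsDomain R] [WfDvdMonoid R]
    (h2 : (2 : R) ≠ 0) (hφ : ∀ x, φ x = 0 ↔ π ∣ x) (hπ : π ≠ 0) (hc : φ c ≠ 0)
    (hu : ¬IsSquare (φ u)) {a b : R} (hdisc : b ^ 2 + 4 * a = π * c)
    {x y : QuadraticAlgebra R a b} (h : x.norm = u * y.norm) : x = 0 ∧ y = 0 := by
  have hsq : (2 * x.re + b * x.im) ^ 2 - π * c * x.im ^ 2 =
      u * ((2 * y.re + b * y.im) ^ 2 - π * c * y.im ^ 2) := by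
    rw [← hdisc, ← four_mul_quadraticAlgebra_norm, ← four_mul_quadraticAlgebra_norm]
    linear_combination 4 * h
  obtain ⟨⟨hx, hx_im⟩, hy, hy_im⟩ := eq_zero_of_sq_sub_mul_sq_eq φ hφ hπ hc hu hsq
  have hx_re : x.re = 0 := by simpa [hx_im, h2] using hx
  have hy_re : y.re = 0 := by simpa [hy_im, h2] using hy
  exact ⟨QuadraticAlgebra.ext hx_re hx_im, QuadraticAlgebra.ext hy_re hy_im⟩

end Descent

section IdealNorm

theorem card_quotient_span_singleton_eq_natAbs_norm {R : Type*} [CommRing R] [IsDomain R]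
    [Module.Free ℤ R] [Module.Finite ℤ R] {x : R} (hx : x ≠ 0) :
    Nat.card (R ⧸ Ideal.span {x}) = (Algebra.norm ℤ x).natAbs := by
  let b := Module.Free.chooseBasis ℤ R
  have hbasis : (fun i => (Ideal.basisSpanSingleton b hx i : R)) = Algebra.lmul ℤ R x ∘ b :=
    funext fun i => Ideal.basisSpanSingleton_apply b hx i
  have hdet : (b.det fun i => (Ideal.basisSpanSingleton b hx i : R)) = Algebra.norm ℤ x := by
    rw [hbasis, b.det_comp, b.det_self, mul_one, Algebra.norm_apply]
  rw [← hdet]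
  exact AddSubgroup.index_eq_natAbs_det b (Ideal.span {x}).toAddSubgroup
    (Ideal.basisSpanSingleton b hx)

theorem quadraticAlgebra_algebraNorm_eq_norm {R : Type*} [CommRing R] {a b : R}
    (x : QuadraticAlgebra R a b) : Algebra.norm R x = x.norm :=
  QuadraticAlgebra.det_toLinearMap_eq_norm x

/-- The ring `ℤ√d` seen as the quadratic `ℤ`-algebra with `ω² = d`. -/
def zsqrtdEquivQuadraticAlgebra (d : ℤ) : ℤ√d ≃+* QuadraticAlgebra ℤ d 0 where
  toFun z := ⟨z.re, z.im⟩
  invFun x := ⟨x.re, x.im⟩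
  map_add' z w := rfl
  map_mul' z w := by ext <;> simp

instance (d : ℤ) : Module.Free ℤ (ℤ√d) :=
  .of_equiv (zsqrtdEquivQuadraticAlgebra d).symm.toIntAlgEquiv.toLinearEquiv

instance (d : ℤ) : Module.Finite ℤ (ℤ√d) :=
  .equiv (zsqrtdEquivQuadraticAlgebra d).symm.toIntAlgEquiv.toLinearEquiv

theorem zsqrtd_algebraNorm_eq_norm {d : ℤ} (z : ℤ√d) : Algebra.norm ℤ z = z.norm := by
  rw [← Algebra.norm_eq_of_algEquiv (zsqrtdEquivQuadraticAlgebra d).toIntAlgEquiv,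
    quadraticAlgebra_algebraNorm_eq_norm]
  simp [zsqrtdEquivQuadraticAlgebra, QuadraticAlgebra.norm_def, Zsqrtd.norm_def, mul_assoc]

end IdealNorm

/-- The ring `ℤ[i][ω]` with `ω² = 1 + ω`, an abstract model of `O_L`. Its `star` is `σ` and its
`norm` is the relative norm `x ↦ x σ(x)`, with values in `ℤ[i]`. -/
abbrev GoldenInt : Type := QuadraticAlgebra GaussianInt 1 1

section Determinant

/-- Reduction of Gaussian integers modulo the prime `2 - i`, sending `i` to `2`. -/
def gaussianModFive : GaussianInt →+* ZMod 5 := Zsqrtd.lift ⟨2, by decide⟩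

theorem gaussianModFive_apply (x : GaussianInt) :
    gaussianModFive x = (x.re : ZMod 5) + x.im * 2 := rfl

theorem gaussianModFive_eq_zero_iff (x : GaussianInt) :
    gaussianModFive x = 0 ↔ (⟨2, -1⟩ : GaussianInt) ∣ x := by
  constructor
  · intro h
    rw [gaussianModFive_apply] at h
    have hdvd : (5 : ℤ) ∣ x.re + x.im * 2 :=
      (ZMod.intCast_zmod_eq_zero_iff_dvd _ 5).1 (by exact_mod_cast h)
    obtain ⟨k, hk⟩ := hdvd
    refine ⟨⟨2 * k - x.im, k⟩, Zsqrtd.ext ?_ ?_⟩ <;>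
      simp only [Zsqrtd.re_mul, Zsqrtd.im_mul] <;> linarith
  · rintro ⟨y, rfl⟩
    have hprime : gaussianModFive ⟨2, -1⟩ = 0 := by decide
    rw [map_mul, hprime, zero_mul]

theorem goldenInt_eq_zero_of_norm_eq_sqrtd_mul_norm {x y : GoldenInt}
    (h : x.norm = Zsqrtd.sqrtd * y.norm) : x = 0 ∧ y = 0 := by
  have hconj : gaussianModFive ⟨2, 1⟩ ≠ 0 := by decide
  have hsqrtd : ¬IsSquare (gaussianModFive Zsqrtd.sqrtd) := by decide
  have hdisc : (1 : GaussianInt) ^ 2 + 4 * 1 = ⟨2, -1⟩ * ⟨2, 1⟩ := by decide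
  have : Fact (Nat.Prime 5) := ⟨Nat.prime_five⟩
  exact quadraticAlgebra_eq_zero_of_norm_eq_mul_norm gaussianModFive (by decide)
    gaussianModFive_eq_zero_iff (by decide) hconj hsqrtd hdisc h

theorem goldenInt_norm_eq_zero_iff {x : GoldenInt} : x.norm = 0 ↔ x = 0 :=
  ⟨fun h => (goldenInt_eq_zero_of_norm_eq_sqrtd_mul_norm (y := 0) (by simp [h])).1,
    fun h => by simp [h]⟩

/-- The quantity `x σ(x) - i y σ(y)`, the determinant of the Golden codeword with entries `x, y`
up to normalization. -/
def goldenDet (x y : GoldenInt) : GaussianInt := x.norm - Zsqrtd.sqrtd * y.norm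

theorem goldenDet_eq_zero_iff {x y : GoldenInt} : goldenDet x y = 0 ↔ x = 0 ∧ y = 0 := by
  refine ⟨fun h => goldenInt_eq_zero_of_norm_eq_sqrtd_mul_norm (sub_eq_zero.1 h), ?_⟩
  rintro ⟨rfl, rfl⟩
  simp [goldenDet]

theorem goldenDet_mul_mul (b x y : GoldenInt) :
    goldenDet (b * x) (b * y) = b.norm * goldenDet x y := by
  simp only [goldenDet, map_mul]
  ring

theorem one_le_normSq_toComplex {z : GaussianInt} (hz : z ≠ 0) :
    1 ≤ Complex.normSq (toComplex z) := by
  rw [← intCast_real_norm]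
  exact_mod_cast norm_pos.2 hz

theorem normSq_norm_le_normSq_goldenDet_mul (b : GoldenInt) {x y : GoldenInt}
    (h : ¬(x = 0 ∧ y = 0)) :
    Complex.normSq (toComplex b.norm) ≤
      Complex.normSq (toComplex (goldenDet (b * x) (b * y))) := by
  rw [goldenDet_mul_mul, map_mul, Complex.normSq_mul]
  exact le_mul_of_one_le_right (Complex.normSq_nonneg _)
    (one_le_normSq_toComplex (mt goldenDet_eq_zero_iff.1 h))

end Determinant

section Embedding

theorem thC_mul_self : thC * thC = thC + 1 := by
  have h : ((√5 : ℝ) : ℂ) * (√5 : ℝ) = 5 := by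
    exact_mod_cast Real.mul_self_sqrt (show (0 : ℝ) ≤ 5 by norm_num)
  unfold thC
  linear_combination h / 4

theorem thbC_eq : thbC = 1 - thC := by
  unfold thC thbC
  ring

/-- The embedding of the model into `ℂ` that sends `ω` to `θ`. -/
def goldenEmbedding : GoldenInt →+* ℂ where
  toFun x := toComplex x.re + toComplex x.im * thC
  map_zero' := by simp
  map_one' := by simp [QuadraticAlgebra.re_one, QuadraticAlgebra.im_one]
  map_add' x y := by
    simp only [QuadraticAlgebra.re_add, QuadraticAlgebra.im_add, map_add]
    ring
  map_mul' x y := by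
    simp only [QuadraticAlgebra.re_mul, QuadraticAlgebra.im_mul, map_add, map_mul, map_one]
    linear_combination -(toComplex x.im * toComplex y.im) * thC_mul_self

theorem goldenEmbedding_mk (p q : GaussianInt) :
    goldenEmbedding ⟨p, q⟩ = toComplex p + toComplex q * thC := rfl

theorem goldenEmbedding_star_mk (p q : GaussianInt) :
    goldenEmbedding (star ⟨p, q⟩) = toComplex p + toComplex q * thbC := by
  rw [QuadraticAlgebra.star_mk, goldenEmbedding_mk, thbC_eq]
  simp only [map_add, map_mul, map_neg, map_one]
  ring

theorem goldenEmbedding_mul_star (x : GoldenInt) :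
    goldenEmbedding x * goldenEmbedding (star x) = toComplex x.norm := by
  rw [← map_mul, ← QuadraticAlgebra.algebraMap_norm_eq_mul_star, QuadraticAlgebra.algebraMap_eq,
    goldenEmbedding_mk, map_zero, zero_mul, add_zero]

theorem toComplex_goldenDet (x y : GoldenInt) :
    toComplex (goldenDet x y) = goldenEmbedding x * goldenEmbedding (star x) -
      Complex.I * (goldenEmbedding y * goldenEmbedding (star y)) := by
  simp [goldenDet, goldenEmbedding_mul_star, toComplex_def Zsqrtd.sqrtd]

theorem toComplex_goldenDet_mul_mk (B : GoldenInt) (a b c d : GaussianInt) :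
    toComplex (goldenDet (B * ⟨a, b⟩) (B * ⟨c, d⟩)) =
      (goldenEmbedding B * (toComplex a + toComplex b * thC)) *
          (goldenEmbedding (star B) * (toComplex a + toComplex b * thbC)) -
        Complex.I * ((goldenEmbedding B * (toComplex c + toComplex d * thC)) *
          (goldenEmbedding (star B) * (toComplex c + toComplex d * thbC))) := by
  simp only [toComplex_goldenDet, star_mul', map_mul, goldenEmbedding_star_mk, goldenEmbedding_mk]

theorem goldenEmbedding_injective : Function.Injective goldenEmbedding := by
  refine (injective_iff_map_eq_zero _).2 fun x hx => goldenInt_norm_eq_zero_iff.1 ?_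
  rw [← toComplex_eq_zero, ← goldenEmbedding_mul_star, hx, zero_mul]

instance : IsDomain GoldenInt := goldenEmbedding_injective.isDomain goldenEmbedding

theorem toComplex_mem_OL (p : GaussianInt) : toComplex p ∈ OL := by
  rw [toComplex_def]
  exact add_mem (intCast_mem _ _) (mul_mem (intCast_mem _ _) (Subring.subset_closure (by simp)))

theorem goldenEmbedding_mem_OL (x : GoldenInt) : goldenEmbedding x ∈ OL :=
  add_mem (toComplex_mem_OL _) (mul_mem (toComplex_mem_OL _) (Subring.subset_closure (by simp)))

theorem OL_le_range_goldenEmbedding : OL ≤ goldenEmbedding.range := by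
  refine Subring.closure_le.2 ?_
  rintro z (rfl | rfl)
  · exact ⟨⟨Zsqrtd.sqrtd, 0⟩, by simp [goldenEmbedding_mk, toComplex_def]⟩
  · exact ⟨⟨0, 1⟩, by simp [goldenEmbedding_mk]⟩

/-- The isomorphism of the model with the subring `O_L` of `ℂ`. -/
def goldenEquiv : GoldenInt ≃+* OL :=
  .ofBijective (goldenEmbedding.codRestrict OL goldenEmbedding_mem_OL)
    ⟨fun _ _ h => goldenEmbedding_injective (congrArg Subtype.val h),
      fun z => (OL_le_range_goldenEmbedding z.2).imp fun _ hx => Subtype.ext hx⟩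

instance : Module.Free ℤ GoldenInt := .trans (R := ℤ) (S := GaussianInt)

instance : Module.Finite ℤ GoldenInt := .trans GaussianInt _

theorem goldenInt_algebraNorm_int (x : GoldenInt) : Algebra.norm ℤ x = x.norm.norm := by
  rw [← zsqrtd_algebraNorm_eq_norm, ← quadraticAlgebra_algebraNorm_eq_norm, Algebra.norm_norm]

theorem card_OL_quotient_span_singleton {p q : GaussianInt} (h0 : ¬(p = 0 ∧ q = 0))
    (hmem : toComplex p + toComplex q * thC ∈ OL) :
    (Nat.card (OL ⧸ Ideal.span {(⟨toComplex p + toComplex q * thC, hmem⟩ : OL)}) : ℝ) =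
      Complex.normSq (toComplex (QuadraticAlgebra.norm (⟨p, q⟩ : GoldenInt))) := by
  have hx : (⟨p, q⟩ : GoldenInt) ≠ 0 := fun h => h0 (by simpa [QuadraticAlgebra.ext_iff] using h)
  have hspan : Ideal.span {(⟨toComplex p + toComplex q * thC, hmem⟩ : OL)} =
      (Ideal.span {(⟨p, q⟩ : GoldenInt)}).map (goldenEquiv : GoldenInt →+* OL) := by
    rw [Ideal.map_span, Set.image_singleton]
    rfl
  rw [← Nat.card_congr (Ideal.quotientEquiv _ _ goldenEquiv hspan).toEquiv,
    card_quotient_span_singleton_eq_natAbs_norm hx, goldenInt_algebraNorm_int,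
    natCast_natAbs_norm, intCast_real_norm]

theorem prod_card_OL_quotient_span_singleton {ι : Type*} (β : ι → GaussianInt × GaussianInt)
    (S : Finset ι) (hβ0 : ∀ s ∈ S, ¬((β s).1 = 0 ∧ (β s).2 = 0))
    (hmem : ∀ s, toComplex (β s).1 + toComplex (β s).2 * thC ∈ OL) :
    ∏ s ∈ S, (Nat.card (OL ⧸ Ideal.span
        {(⟨toComplex (β s).1 + toComplex (β s).2 * thC, hmem s⟩ : OL)}) : ℝ) =
      Complex.normSq (toComplex
        (QuadraticAlgebra.norm (∏ s ∈ S, (⟨(β s).1, (β s).2⟩ : GoldenInt)))) := by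
  simp only [map_prod]
  exact Finset.prod_congr rfl fun s hs => card_OL_quotient_span_singleton (hβ0 s hs) (hmem s)

end Embedding

theorem stmt7_general {ι : Type*} (β : ι → GaussianInt × GaussianInt) (S : Finset ι)
    (hβ0 : ∀ s ∈ S, ¬((β s).1 = 0 ∧ (β s).2 = 0))
    (hmem : ∀ s, toComplex (β s).1 + toComplex (β s).2 * thC ∈ OL) :
    IsLeast { r : ℝ | ∃ a b c d : GaussianInt, ¬(a = 0 ∧ b = 0 ∧ c = 0 ∧ d = 0) ∧
      r = Complex.normSq
        (((∏ s ∈ S, (toComplex (β s).1 + toComplex (β s).2 * thC))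
              * (toComplex a + toComplex b * thC))
            * ((∏ s ∈ S, (toComplex (β s).1 + toComplex (β s).2 * thbC))
              * (toComplex a + toComplex b * thbC))
          - Complex.I *
            (((∏ s ∈ S, (toComplex (β s).1 + toComplex (β s).2 * thC))
                * (toComplex c + toComplex d * thC))
              * ((∏ s ∈ S, (toComplex (β s).1 + toComplex (β s).2 * thbC))
                * (toComplex c + toComplex d * thbC)))) }
      (∏ s ∈ S, (Nat.card
        (↥OL ⧸ Ideal.span
          {(⟨toComplex (β s).1 + toComplex (β s).2 * thC, hmem s⟩ : OL)}) : ℝ)) := by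
  let B : GoldenInt := ∏ s ∈ S, ⟨(β s).1, (β s).2⟩
  have hB : ∏ s ∈ S, (toComplex (β s).1 + toComplex (β s).2 * thC) = goldenEmbedding B := by
    simp only [B, map_prod, goldenEmbedding_mk]
  have hσB : ∏ s ∈ S, (toComplex (β s).1 + toComplex (β s).2 * thbC) =
      goldenEmbedding (star B) := by
    simp only [B, ← starRingEnd_apply, map_prod]
    simp only [starRingEnd_apply, goldenEmbedding_star_mk]
  rw [prod_card_OL_quotient_span_singleton β S hβ0 hmem]
  simp only [hB, hσB, ← toComplex_goldenDet_mul_mk]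
  constructor
  · refine ⟨1, 0, 0, 0, by simp, ?_⟩
    have hone : goldenDet ⟨1, 0⟩ ⟨0, 0⟩ = 1 := by simp [goldenDet, QuadraticAlgebra.norm_def]
    rw [goldenDet_mul_mul, hone, mul_one]
  · rintro r ⟨a, b, c, d, hne, rfl⟩
    exact normSq_norm_le_normSq_goldenDet_mul B
      (by simpa [QuadraticAlgebra.ext_iff, and_assoc] using hne)

/-- Let `β 1, …, β K` be nonzero elements `βₛ = pₛ + qₛθ` of `O_L = ℤ[i][θ]` whose
generated ideals are pairwise comaximal.  For every subset `S ⊆ {1,…,K}`, with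
`B = ∏_{s∈S} βₛ` (so `σ(B) = ∏_{s∈S} σ(βₛ)`), the minimum of
`|x₀σ(x₀) − i·x₁σ(x₁)|²` over `(x₀,x₁) ∈ (B·O_L)² \ {(0,0)}` equals
`∏_{s∈S} N(βₛO_L)`, where `N` is the absolute ideal norm `N(I) = |O_L/I|`. -/
theorem stmt7 {K : ℕ} (β : Fin K → GaussianInt × GaussianInt)
    (hβ0 : ∀ s, ¬((β s).1 = 0 ∧ (β s).2 = 0))
    (hmem : ∀ s, toComplex (β s).1 + toComplex (β s).2 * thC ∈ OL)
    (hcomax : ∀ s t, s ≠ t →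
      Ideal.span {(⟨toComplex (β s).1 + toComplex (β s).2 * thC, hmem s⟩ : OL)} ⊔
        Ideal.span {(⟨toComplex (β t).1 + toComplex (β t).2 * thC, hmem t⟩ : OL)} = ⊤)
    (S : Finset (Fin K)) :
    IsLeast { r : ℝ | ∃ a b c d : GaussianInt, ¬(a = 0 ∧ b = 0 ∧ c = 0 ∧ d = 0) ∧
      r = Complex.normSq
        (((∏ s ∈ S, (toComplex (β s).1 + toComplex (β s).2 * thC))
              * (toComplex a + toComplex b * thC))
            * ((∏ s ∈ S, (toComplex (β s).1 + toComplex (β s).2 * thbC))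
              * (toComplex a + toComplex b * thbC))
          - Complex.I *
            (((∏ s ∈ S, (toComplex (β s).1 + toComplex (β s).2 * thC))
                * (toComplex c + toComplex d * thC))
              * ((∏ s ∈ S, (toComplex (β s).1 + toComplex (β s).2 * thbC))
                * (toComplex c + toComplex d * thbC)))) }
      (∏ s ∈ S, (Nat.card
        (↥OL ⧸ Ideal.span
          {(⟨toComplex (β s).1 + toComplex (β s).2 * thC, hmem s⟩ : OL)}) : ℝ)) := by
  exact stmt7_general β S (fun s _ => hβ0 s) hmem
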